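/- arXiv:2407.05223 — 4 statements merged into one kernel-verified Lean document; each statement's English description precedes it below -/
import Mathlib

section
/- Let (X,d) be a nonempty compact metric space. A functional μ : C(X,ℝ) → ℝ satisfying μ(c + f) = c + μ(f) for all constants c and μ(max(f,g)) = max(μ(f), μ(g)) for all f,g (a Maslov/idempotent measure) admits a density: there exists an upper semicontinuous function λ : X → ℝ ∪ {−∞} (with values in EReal, avoiding +∞) that is not identically −∞, such that for every ψ ∈ C(X,ℝ), μ(ψ) = sup_{x∈X} (λ(x) + ψ(x)). This λ is unique among upper semicontinuous functions X → ℝ ∪ {−∞} with nonempty support. Moreover μ(0) = 0 if and only if sup_{x∈X} λ(x) = 0. -/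
/-!
The density is `lam x = ⨅ f, (μ f - f x)`, the largest function with `lam + f ≤ μ f` for all `f`.
If `lam + ψ < c` everywhere, then near each point `ψ` is strictly below some `g` with `μ g = c`;
such `g` may be replaced by finite maxima without changing `μ g`, so compactness gives a single `g`
above `ψ` everywhere, and `μ ψ ≤ c`.

Conversely, let an upper semicontinuous `lam'` represent `μ`. Given `lam' x < c`, a continuous
majorant `h ≥ lam'` with `h x = c` satisfies `μ (-h) ≤ 0`, whence `lam x ≤ μ (-h) + h x ≤ c`.
-/

section ContinuousFunctions

variable {X : Type*} [TopologicalSpace X]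

theorem exists_mem_forall_lt_of_directedOn {α : Type*} [LinearOrder α] [TopologicalSpace α]
    [OrderClosedTopology α] [CompactSpace X] {S : Set C(X, α)} (hS : S.Nonempty)
    (hdir : DirectedOn (· ≤ ·) S) {ψ : C(X, α)} (hlt : ∀ x, ∃ g ∈ S, ψ x < g x) :
    ∃ g ∈ S, ∀ x, ψ x < g x := by
  have : Nonempty S := hS.to_subtype
  have hcover : Set.univ ⊆ ⋃ g : S, {x | ψ x < g.1 x} := fun x _ ↦ by
    obtain ⟨g, hgS, hg⟩ := hlt x
    exact Set.mem_iUnion.2 ⟨⟨g, hgS⟩, hg⟩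
  have hdirected : Directed (· ⊆ ·) fun g : S ↦ {x | ψ x < g.1 x} :=
    hdir.directed_val.mono_comp (g := fun g : C(X, α) ↦ {x | ψ x < g x}) _
      fun _ _ hle x hx ↦ lt_of_lt_of_le hx (hle x)
  obtain ⟨⟨g, hgS⟩, hg⟩ := isCompact_univ.elim_directed_cover _
    (fun g : S ↦ isOpen_lt ψ.continuous g.1.continuous) hcover hdirected
  exact ⟨g, hgS, fun x ↦ hg (Set.mem_univ x)⟩

theorem exists_continuousMap_ge_of_upperSemicontinuousAt [CompletelyRegularSpace X]
    {φ : X → EReal} {x : X} {c M : ℝ} (hφ : UpperSemicontinuousAt φ x) (hx : φ x < c)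
    (hM : ∀ y, φ y ≤ M) : ∃ h : C(X, ℝ), h x = c ∧ ∀ y, φ y ≤ h y := by
  obtain ⟨U, hU, hUo, hxU⟩ := eventually_nhds_iff.1 (hφ c hx)
  obtain ⟨u, hu, hux, huU⟩ := CompletelyRegularSpace.completely_regular_isOpen x U hUo hxU
  refine ⟨⟨fun y ↦ c + max (M - c) 0 * u y, by fun_prop⟩, by simp [hux], fun y ↦ ?_⟩
  by_cases hy : y ∈ U
  · refine (hU y hy).le.trans (EReal.coe_le_coe_iff.2 ?_)
    exact le_add_of_nonneg_right (mul_nonneg (le_max_right _ _) (u y).2.1)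
  · have huy : (u y : ℝ) = 1 := congrArg Subtype.val (huU hy)
    refine (hM y).trans (EReal.coe_le_coe_iff.2 ?_)
    change M ≤ c + max (M - c) 0 * u y
    rw [huy, mul_one]
    linarith [le_max_left (M - c) 0]

end ContinuousFunctions

theorem ereal_add_coe_le_coe_iff {a : EReal} {b c : ℝ} :
    a + b ≤ c ↔ a ≤ ((c - b : ℝ) : EReal) := by
  rw [EReal.coe_sub,
    EReal.le_sub_iff_add_le (.inl (EReal.coe_ne_bot b)) (.inl (EReal.coe_ne_top b))]

section Maslov

variable {X : Type*} [TopologicalSpace X] {μ : C(X, ℝ) → ℝ} {lam : X → EReal}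

/-- A Maslov (idempotent) measure: a functional on `C(X, ℝ)` that is linear over the max-plus
semiring, whose multiplication is the addition of constants. -/
structure IsMaslovMeasure (μ : C(X, ℝ) → ℝ) : Prop where
  map_const_add (c : ℝ) (f : C(X, ℝ)) : μ (ContinuousMap.const X c + f) = c + μ f
  map_sup (f g : C(X, ℝ)) : μ (f ⊔ g) = max (μ f) (μ g)

/-- `lam` is a density of `μ`: the functional `μ` is the max-plus integral against `lam`.
Semicontinuity of `lam` is not part of the notion. -/
def IsMaslovDensity (μ : C(X, ℝ) → ℝ) (lam : X → EReal) : Prop :=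
  ∀ ψ : C(X, ℝ), (μ ψ : EReal) = ⨆ x : X, lam x + (ψ x : EReal)

/-- The canonical candidate for a density of `μ`, given by the max-plus analogue of the Legendre
transform. It takes the value `⊥` where the differences `μ f - f x` are unbounded below. -/
noncomputable def maslovDensity (μ : C(X, ℝ) → ℝ) (x : X) : EReal :=
  ⨅ f : C(X, ℝ), ((μ f - f x : ℝ) : EReal)

theorem maslovDensity_le (μ : C(X, ℝ) → ℝ) (f : C(X, ℝ)) (x : X) :
    maslovDensity μ x ≤ ((μ f - f x : ℝ) : EReal) :=
  iInf_le _ f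

theorem upperSemicontinuous_maslovDensity (μ : C(X, ℝ) → ℝ) :
    UpperSemicontinuous (maslovDensity μ) :=
  upperSemicontinuous_iInf fun f ↦
    have hcont : Continuous fun x ↦ μ f - f x := by fun_prop
    (continuous_coe_real_ereal.comp hcont).upperSemicontinuous

namespace IsMaslovMeasure

theorem map_const_sub_add (hμ : IsMaslovMeasure μ) (c : ℝ) (f : C(X, ℝ)) :
    μ (ContinuousMap.const X (c - μ f) + f) = c := by
  rw [hμ.map_const_add, sub_add_cancel]

theorem supClosed_fiber (hμ : IsMaslovMeasure μ) (c : ℝ) : SupClosed {g | μ g = c} :=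
  fun f (hf : μ f = c) g (hg : μ g = c) ↦ show μ (f ⊔ g) = c by rw [hμ.map_sup, hf, hg, max_self]

theorem exists_eq_and_lt_of_maslovDensity_add_lt (hμ : IsMaslovMeasure μ) {ψ : C(X, ℝ)} {x : X}
    {c : ℝ} (h : maslovDensity μ x + ψ x < c) : ∃ g : C(X, ℝ), μ g = c ∧ ψ x < g x := by
  have hlt : maslovDensity μ x < ((c - ψ x : ℝ) : EReal) := by
    rw [EReal.coe_sub]
    exact (EReal.lt_sub_iff_add_lt (.inl (EReal.coe_ne_bot _)) (.inl (EReal.coe_ne_top _))).2 h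
  obtain ⟨f, hf⟩ := iInf_lt_iff.1 hlt
  refine ⟨ContinuousMap.const X (c - μ f) + f, hμ.map_const_sub_add c f, ?_⟩
  rw [ContinuousMap.add_apply, ContinuousMap.const_apply]
  linarith [EReal.coe_lt_coe_iff.1 hf]

theorem le_of_forall_maslovDensity_add_lt [CompactSpace X] (hμ : IsMaslovMeasure μ) {ψ : C(X, ℝ)}
    {c : ℝ} (h : ∀ x, maslovDensity μ x + ψ x < c) : μ ψ ≤ c := by
  obtain ⟨g, rfl, hg⟩ := exists_mem_forall_lt_of_directedOn (S := {g | μ g = c})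
    ⟨_, hμ.map_const_sub_add c 0⟩ (hμ.supClosed_fiber c).directedOn
    fun x ↦ hμ.exists_eq_and_lt_of_maslovDensity_add_lt (h x)
  exact Monotone.of_map_sup hμ.map_sup fun x ↦ (hg x).le

theorem isMaslovDensity_maslovDensity [CompactSpace X] (hμ : IsMaslovMeasure μ) :
    IsMaslovDensity μ (maslovDensity μ) := by
  intro ψ
  apply le_antisymm
  · refine EReal.le_of_forall_lt_iff_le.1 fun c hc ↦ EReal.coe_le_coe_iff.2 ?_
    exact hμ.le_of_forall_maslovDensity_add_lt fun x ↦
      (le_iSup (fun x ↦ maslovDensity μ x + (ψ x : EReal)) x).trans_lt hc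
  · exact iSup_le fun x ↦ ereal_add_coe_le_coe_iff.2 (maslovDensity_le μ ψ x)

end IsMaslovMeasure

namespace IsMaslovDensity

theorem apply_le_iff (h : IsMaslovDensity μ lam) {ψ : C(X, ℝ)} {c : ℝ} :
    μ ψ ≤ c ↔ ∀ x, lam x ≤ ((c - ψ x : ℝ) : EReal) := by
  rw [← EReal.coe_le_coe_iff, h ψ, iSup_le_iff]
  exact forall_congr' fun x ↦ ereal_add_coe_le_coe_iff

theorem iSup_eq (h : IsMaslovDensity μ lam) : ⨆ x, lam x = μ 0 := by
  simp only [h 0, ContinuousMap.zero_apply, EReal.coe_zero, add_zero]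

theorem le_apply_zero (h : IsMaslovDensity μ lam) (x : X) : lam x ≤ μ 0 :=
  h.iSup_eq ▸ le_iSup lam x

theorem ne_top (h : IsMaslovDensity μ lam) (x : X) : lam x ≠ ⊤ :=
  ne_top_of_le_ne_top (EReal.coe_ne_top _) (h.le_apply_zero x)

theorem exists_ne_bot (h : IsMaslovDensity μ lam) : ∃ x, lam x ≠ ⊥ := by
  by_contra! hbot
  exact EReal.coe_ne_bot (μ 0) (h.iSup_eq ▸ iSup_eq_bot.2 hbot)

theorem apply_zero_eq_zero_iff (h : IsMaslovDensity μ lam) : μ 0 = 0 ↔ ⨆ x, lam x = 0 := by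
  rw [h.iSup_eq, EReal.coe_eq_zero]

theorem eq_maslovDensity [CompletelyRegularSpace X] (h : IsMaslovDensity μ lam)
    (husc : UpperSemicontinuous lam) : lam = maslovDensity μ := by
  funext x
  apply le_antisymm
  · exact le_iInf fun f ↦ h.apply_le_iff.1 le_rfl x
  · refine EReal.le_of_forall_lt_iff_le.1 fun c hc ↦ ?_
    obtain ⟨g, hgx, hg⟩ :=
      exists_continuousMap_ge_of_upperSemicontinuousAt (husc x) hc h.le_apply_zero
    have hμg : μ (-g) ≤ 0 := h.apply_le_iff.2 fun y ↦ by simpa using hg y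
    refine (maslovDensity_le μ (-g) x).trans (EReal.coe_le_coe_iff.2 ?_)
    rw [ContinuousMap.neg_apply, hgx]
    linarith

end IsMaslovDensity

theorem maslov_measure_density_general [CompactSpace X] [CompletelyRegularSpace X]
    (hμ : IsMaslovMeasure μ) :
    ∃ lam : X → EReal,
      (UpperSemicontinuous lam ∧ (∀ x, lam x ≠ ⊤) ∧ (∃ x, lam x ≠ ⊥) ∧ IsMaslovDensity μ lam) ∧
      (μ 0 = 0 ↔ (⨆ x : X, lam x) = 0) ∧
      (∀ lam' : X → EReal, UpperSemicontinuous lam' → IsMaslovDensity μ lam' → lam' = lam) := by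
  have hdens := hμ.isMaslovDensity_maslovDensity
  exact ⟨maslovDensity μ,
    ⟨upperSemicontinuous_maslovDensity μ, hdens.ne_top, hdens.exists_ne_bot, hdens⟩,
    hdens.apply_zero_eq_zero_iff, fun _ husc h ↦ h.eq_maslovDensity husc⟩

end Maslov

theorem maslov_measure_density
    {X : Type*} [MetricSpace X] [CompactSpace X] [Nonempty X]
    (μ : C(X, ℝ) → ℝ)
    (h1 : ∀ (c : ℝ) (f : C(X, ℝ)), μ (ContinuousMap.const X c + f) = c + μ f)
    (h2 : ∀ f g : C(X, ℝ), μ (f ⊔ g) = max (μ f) (μ g)) :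
    ∃ lam : X → EReal,
      (UpperSemicontinuous lam ∧ (∀ x, lam x ≠ ⊤) ∧ (∃ x, lam x ≠ ⊥) ∧
        (∀ ψ : C(X, ℝ), (μ ψ : EReal) = ⨆ x : X, lam x + (ψ x : EReal))) ∧
      (μ 0 = 0 ↔ (⨆ x : X, lam x) = 0) ∧
      (∀ lam' : X → EReal,
        UpperSemicontinuous lam' → (∀ x, lam' x ≠ ⊤) → (∃ x, lam' x ≠ ⊥) →
        (∀ ψ : C(X, ℝ), (μ ψ : EReal) = ⨆ x : X, lam' x + (ψ x : EReal)) →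
        lam' = lam) := by
  obtain ⟨lam, hlam, hzero, huniq⟩ := maslov_measure_density_general ⟨h1, h2⟩
  exact ⟨lam, hlam, hzero, fun lam' husc _ _ h ↦ huniq lam' husc h⟩
end

section
/- Let S be an mpCIFS on a nonempty compact metric space X and let μ be an idempotent probability on X. Then the functional Λ_μ : C(X,ℝ) → ℝ defined by Λ_μ(f) := sup_{j∈ℕ} ( q_j + μ(f ∘ φ_j) ) is well defined (the supremum is finite) and is itself an idempotent probability on X: Λ_μ(0) = 0, Λ_μ(c + f) = c + Λ_μ(f) for every constant c ∈ ℝ, and Λ_μ(max(f,g)) = max(Λ_μ(f), Λ_μ(g)) for all f, g ∈ C(X,ℝ). -/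
/-!
A functional that preserves binary maxima is monotone, so comparing `f` with the constant `‖f‖`
bounds every idempotent probability by `‖f‖` at `f`. This bound does not depend on the functional,
so a family of idempotent probabilities with weights bounded above has a finite weighted supremum
at `f`. Adding a constant and taking a maximum both commute with suprema of bounded families, and
the value at `0` is the supremum of the weights. Here the family consists of the pushforwards of
`μ` under the maps `φ j`.
-/

open scoped NNReal

def IsIdempotentProb {X : Type*} [TopologicalSpace X] (μ : C(X, ℝ) → ℝ) : Prop :=
  (∀ (c : ℝ) (f : C(X, ℝ)), μ (ContinuousMap.const X c + f) = c + μ f) ∧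
  (∀ f g : C(X, ℝ), μ (f ⊔ g) = max (μ f) (μ g)) ∧
  μ 0 = 0

namespace IsIdempotentProb

variable {X Y : Type*} [TopologicalSpace X] [TopologicalSpace Y]

section Basic

variable {μ : C(X, ℝ) → ℝ} (hμ : IsIdempotentProb μ)
include hμ

theorem map_const_add (c : ℝ) (f : C(X, ℝ)) : μ (ContinuousMap.const X c + f) = c + μ f :=
  hμ.1 c f

protected theorem map_sup (f g : C(X, ℝ)) : μ (f ⊔ g) = μ f ⊔ μ g :=
  hμ.2.1 f g

protected theorem map_zero : μ 0 = 0 :=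
  hμ.2.2

protected theorem map_const (c : ℝ) : μ (ContinuousMap.const X c) = c := by
  simpa only [add_zero, hμ.map_zero] using hμ.map_const_add c 0

protected theorem monotone : Monotone μ := fun f g hfg => by
  rw [← sup_eq_right, ← hμ.map_sup, sup_eq_right.mpr hfg]

theorem apply_le_norm [CompactSpace X] (f : C(X, ℝ)) : μ f ≤ ‖f‖ :=
  calc
    μ f ≤ μ (ContinuousMap.const X ‖f‖) := hμ.monotone f.apply_le_norm
    _ = ‖f‖ := hμ.map_const ‖f‖

theorem pushforward (φ : C(X, Y)) : IsIdempotentProb fun f : C(Y, ℝ) => μ (f.comp φ) :=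
  ⟨fun c f => hμ.map_const_add c (f.comp φ), fun f g => hμ.map_sup (f.comp φ) (g.comp φ),
    hμ.map_zero⟩

end Basic

section WeightedSupremum

variable [CompactSpace X] {ι : Type*} {ν : ι → C(X, ℝ) → ℝ} {q : ι → ℝ}

theorem bddAbove_range_add (hν : ∀ i, IsIdempotentProb (ν i)) (hq : BddAbove (Set.range q))
    (f : C(X, ℝ)) : BddAbove (Set.range fun i => q i + ν i f) :=
  hq.range_add ⟨‖f‖, Set.forall_mem_range.mpr fun i => (hν i).apply_le_norm f⟩

theorem weighted_iSup (hν : ∀ i, IsIdempotentProb (ν i)) (hq : IsLUB (Set.range q) 0) :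
    IsIdempotentProb fun f => ⨆ i, (q i + ν i f) := by
  have : Nonempty ι := Set.range_nonempty_iff_nonempty.mp hq.nonempty
  have hbdd := bddAbove_range_add hν hq.bddAbove
  refine ⟨fun c f => ?_, fun f g => ?_, ?_⟩
  · calc
      ⨆ i, (q i + ν i (ContinuousMap.const X c + f)) = ⨆ i, (c + (q i + ν i f)) := by
        simp only [(hν _).map_const_add, add_left_comm]
      _ = c + ⨆ i, (q i + ν i f) := (add_ciSup (hbdd f) c).symm
  · calc
      ⨆ i, (q i + ν i (f ⊔ g)) = ⨆ i, ((q i + ν i f) ⊔ (q i + ν i g)) := by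
        simp only [(hν _).map_sup, add_sup]
      _ = (⨆ i, (q i + ν i f)) ⊔ ⨆ i, (q i + ν i g) := ciSup_sup_eq (hbdd f) (hbdd g)
  · calc
      ⨆ i, (q i + ν i 0) = ⨆ i, q i := by simp only [(hν _).map_zero, add_zero]
      _ = 0 := hq.ciSup_eq

end WeightedSupremum

end IsIdempotentProb

theorem mpCIFS_Lambda_is_idempotent_prob_general
    {X Y : Type*} [TopologicalSpace X] [TopologicalSpace Y] [CompactSpace Y] {ι : Type*}
    (φ : ι → C(X, Y)) {q : ι → ℝ} (hq : IsLUB (Set.range q) 0)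
    {μ : C(X, ℝ) → ℝ} (hμ : IsIdempotentProb μ) :
    (∀ f : C(Y, ℝ), BddAbove (Set.range fun i => q i + μ (f.comp (φ i)))) ∧
    IsIdempotentProb (fun f : C(Y, ℝ) => ⨆ i, (q i + μ (f.comp (φ i)))) :=
  have hφμ := fun i => hμ.pushforward (φ i)
  ⟨IsIdempotentProb.bddAbove_range_add hφμ hq.bddAbove, IsIdempotentProb.weighted_iSup hφμ hq⟩

theorem mpCIFS_Lambda_is_idempotent_prob
    {X : Type*} [MetricSpace X] [CompactSpace X] [Nonempty X]
    (γ : ℝ≥0) (hγ0 : 0 < γ) (hγ1 : γ < 1)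
    (φ : ℕ → X → X) (hφ : ∀ j, LipschitzWith γ (φ j))
    (q : ℕ → ℝ) (hq : ∀ j, q j ≤ 0) (hqsup : (⨆ j, q j) = 0)
    (μ : C(X, ℝ) → ℝ) (hμ : IsIdempotentProb μ) :
    (∀ f : C(X, ℝ),
      BddAbove (Set.range fun j : ℕ => q j + μ (f.comp ⟨φ j, (hφ j).continuous⟩))) ∧
    IsIdempotentProb
      (fun f : C(X, ℝ) => ⨆ j : ℕ, (q j + μ (f.comp ⟨φ j, (hφ j).continuous⟩))) :=
  have hqLUB : IsLUB (Set.range q) 0 := hqsup ▸ isLUB_ciSup ⟨0, Set.forall_mem_range.mpr hq⟩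
  mpCIFS_Lambda_is_idempotent_prob_general (fun j => ⟨φ j, (hφ j).continuous⟩) hqLUB hμ
end

section
/- Let X be a nonempty compact metric space, φ_1,…,φ_n : X → X continuous maps and q_1,…,q_n ∈ ℝ weights with max_{1≤j≤n} q_j = 0. Let μ be an idempotent probability on X with density λ : X → ℝ ∪ {−∞}, i.e. μ(f) = sup_{x∈X} (λ(x) + f(x)) for all f ∈ C(X,ℝ). Define L(λ) : X → ℝ ∪ {−∞} by L(λ)(x) = sup { q_j + λ(y) : 1 ≤ j ≤ n, y ∈ X, φ_j(y) = x } (with sup over the empty set equal to −∞). Then for every f ∈ C(X,ℝ), max_{1≤j≤n} ( q_j + μ(f ∘ φ_j) ) = sup_{x∈X} ( L(λ)(x) + f(x) ); that is, M(μ) has density L(λ). -/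
/-!
Addition on the extended reals, with `⊥ + ⊤ = ⊥`, distributes over arbitrary suprema. Hence both
sides of the identity expand to the supremum of `q j + λ x + f (φ j x)` over all `j` and `x`; the
transferred density merely groups the pairs `(j, x)` according to the value of `φ j x`.
-/

theorem ereal_add_sSup (a : EReal) (s : Set EReal) : a + sSup s = ⨆ b ∈ s, a + b := by
  refine le_antisymm (EReal.add_le_of_forall_lt fun a' ha b' hb => ?_)
    (iSup₂_le fun b hb => add_le_add_right (le_sSup hb) a)
  obtain ⟨b, hbs, hb⟩ := lt_sSup_iff.1 hb
  exact le_iSup₂_of_le b hbs (add_le_add ha.le hb.le)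

instance : IsAddQuantale EReal where
  add_sSup_distrib := ereal_add_sSup
  sSup_add_distrib s a := by simp only [add_comm _ a, ereal_add_sSup]

section Transfer

variable {ι X Y Q : Type*} [AddSemigroup Q] [CompleteLattice Q]

/-- The transfer operator `L` of the weighted family `(φ, q)`, acting on densities with values in
an additive quantale `Q` (in the max-plus setting, `Q = EReal`). An empty fibre gives `⊥`. -/
def transfer (φ : ι → X → Y) (q : ι → Q) (lam : X → Q) (y : Y) : Q :=
  ⨆ (j : ι) (x : X) (_ : φ j x = y), q j + lam x

theorem iSup_transfer_add [IsAddQuantale Q] (φ : ι → X → Y) (q : ι → Q) (lam : X → Q) (g : Y → Q) :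
    ⨆ y, (transfer φ q lam y + g y) = ⨆ j, (q j + ⨆ x, (lam x + g (φ j x))) :=
  calc
    ⨆ y, (transfer φ q lam y + g y)
        = ⨆ (y : Y) (j : ι) (x : X) (_ : φ j x = y), (q j + lam x + g y) := by
      simp only [transfer, iSup_subtype', AddQuantale.iSup_add_distrib]
    _ = ⨆ (j : ι) (x : X) (y : Y) (_ : φ j x = y), (q j + lam x + g y) := by
      rw [iSup_comm]
      exact iSup_congr fun j => iSup_comm
    _ = ⨆ (j : ι) (x : X), (q j + (lam x + g (φ j x))) := by
      simp only [iSup_iSup_eq_right, add_assoc]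
    _ = ⨆ j, (q j + ⨆ x, (lam x + g (φ j x))) := by
      simp only [AddQuantale.add_iSup_distrib]

end Transfer

section MarkovOperator

variable {ι X Y : Type*} [TopologicalSpace X] [TopologicalSpace Y]

/-- `lam` is a density of the functional `μ`. The value `⊤` is allowed in the codomain, but
no density of a real-valued functional attains it. -/
def HasDensity (μ : C(X, ℝ) → ℝ) (lam : X → EReal) : Prop :=
  ∀ f : C(X, ℝ), (μ f : EReal) = ⨆ x, (lam x + (f x : EReal))

variable [Fintype ι] [Nonempty ι]

/-- The max-plus Markov operator `M` of the maps `φ` with weights `q`. It is an endomorphism when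
`X = Y`, the case of an iterated function system. -/
def markovOperator (φ : ι → C(X, Y)) (q : ι → ℝ) (μ : C(X, ℝ) → ℝ) (f : C(Y, ℝ)) : ℝ :=
  Finset.univ.sup' Finset.univ_nonempty fun j => q j + μ (f.comp (φ j))

theorem coe_markovOperator (φ : ι → C(X, Y)) (q : ι → ℝ) (μ : C(X, ℝ) → ℝ) (f : C(Y, ℝ)) :
    (markovOperator φ q μ f : EReal) = ⨆ j, ((q j : EReal) + (μ (f.comp (φ j)) : EReal)) := by
  rw [markovOperator, Finset.apply_sup'_eq_sup'_comp _ Real.toEReal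
    fun _ _ => EReal.coe_strictMono.monotone.map_max, Finset.sup'_univ_eq_ciSup]
  simp only [Function.comp_apply, EReal.coe_add]

theorem markov_operator_density_is_transfer_of_density_general (φ : ι → C(X, Y)) (q : ι → ℝ)
    {μ : C(X, ℝ) → ℝ} {lam : X → EReal} (hlam : HasDensity μ lam) :
    HasDensity (markovOperator φ q μ)
      (transfer (fun j => φ j) (fun j => (q j : EReal)) lam) := fun f =>
  calc
    (markovOperator φ q μ f : EReal)
        = ⨆ j, ((q j : EReal) + (μ (f.comp (φ j)) : EReal)) := coe_markovOperator φ q μ f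
    _ = ⨆ j, ((q j : EReal) + ⨆ x, (lam x + (f (φ j x) : EReal))) := by
      simp only [hlam _, ContinuousMap.comp_apply]
    _ = ⨆ y, (transfer (fun j => φ j) (fun j => (q j : EReal)) lam y + (f y : EReal)) :=
      (iSup_transfer_add (fun j => φ j) _ lam fun y => (f y : EReal)).symm

end MarkovOperator

theorem markov_operator_density_is_transfer_of_density
    {X : Type*} [MetricSpace X] [CompactSpace X] [Nonempty X]
    (n : ℕ) (φ : Fin (n + 1) → X → X) (hφ : ∀ j, Continuous (φ j))
    (q : Fin (n + 1) → ℝ)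
    (hq : Finset.univ.sup' Finset.univ_nonempty q = 0)
    (μ : C(X, ℝ) → ℝ) (hμ : IsIdempotentProb μ)
    (lam : X → EReal)
    (hlam : ∀ f : C(X, ℝ), (μ f : EReal) = ⨆ x : X, lam x + (f x : EReal)) :
    ∀ f : C(X, ℝ),
      ((Finset.univ.sup' Finset.univ_nonempty
          (fun j => q j + μ (f.comp ⟨φ j, hφ j⟩)) : ℝ) : EReal) =
        ⨆ x : X,
          ((⨆ (j : Fin (n + 1)) (y : X) (_ : φ j y = x), ((q j : EReal) + lam y))
            + (f x : EReal)) :=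
  markov_operator_density_is_transfer_of_density_general (fun j => ⟨φ j, hφ j⟩) q hlam
end

section
/- Let X be a nonempty compact metric space, let φ_1,…,φ_n : X → X be maps that are all Lipschitz with constant γ ∈ (0,1), and let q_1,…,q_n ∈ ℝ be weights with max_{1≤j≤n} q_j = 0. Let M be the associated Markov operator on idempotent probabilities, M(μ)(f) = max_{1≤j≤n} ( q_j + μ(f ∘ φ_j) ). Then for every a > 0 and all idempotent probabilities μ, ν on X, d_a( M(μ), M(ν) ) ≤ d_{γ·a}(μ, ν). -/
/-- The pseudometric `d_a` on idempotent probabilities. -/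
noncomputable def dLip {X : Type*} [MetricSpace X] (a : ℝ) (μ ν : C(X, ℝ) → ℝ) : ℝ :=
  sSup { r : ℝ | ∃ g : C(X, ℝ), LipschitzWith (Real.toNNReal a) g ∧ r = |μ g - ν g| }

/-!
If `g` is `a`-Lipschitz, then each `g ∘ φ j` is `γ * a`-Lipschitz, so `μ` and `ν` differ on it by at
most `d_{γa}(μ, ν)`. Adding the weight `q j` to both sides does not change the difference, and a
finite maximum is nonexpansive for the sup distance.

The point needing care is that the supremum defining `d_{γa}` is finite. Being monotone and
equivariant under adding constants, `μ` and `ν` are nonexpansive for the sup distance, and on a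
bounded space every `K`-Lipschitz function is within `K * diam X` of a constant.
-/

open scoped NNReal

section Finset

variable {ι G : Type*} [AddCommGroup G] [LinearOrder G] [IsOrderedAddMonoid G]

theorem abs_sup'_sub_sup'_le {s : Finset ι} (hs : s.Nonempty) {u v : ι → G} {d : G}
    (h : ∀ j ∈ s, |u j - v j| ≤ d) : |s.sup' hs u - s.sup' hs v| ≤ d := by
  simp_rw [abs_sub_le_iff, sub_le_iff_le_add] at h ⊢
  constructor
  · exact Finset.sup'_le hs u fun j hj ↦ (h j hj).1.trans <| by gcongr; exact s.le_sup' v hj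
  · exact Finset.sup'_le hs v fun j hj ↦ (h j hj).2.trans <| by gcongr; exact s.le_sup' u hj

end Finset

/-- A topical functional: one that is order preserving and additively homogeneous. Idempotent
probabilities and integration against a probability measure on a compact space are both of this
kind. -/
structure IsTopical {X : Type*} [TopologicalSpace X] (μ : C(X, ℝ) → ℝ) : Prop where
  monotone : Monotone μ
  const_add (c : ℝ) (f : C(X, ℝ)) : μ (ContinuousMap.const X c + f) = c + μ f

theorem IsIdempotentProb.isTopical {X : Type*} [TopologicalSpace X] {μ : C(X, ℝ) → ℝ}
    (hμ : IsIdempotentProb μ) : IsTopical μ where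
  monotone f g hfg := by
    rw [← sup_eq_right.mpr hfg, hμ.2.1]
    exact le_max_left _ _
  const_add := hμ.1

namespace IsTopical

section TopologicalSpace

variable {X : Type*} [TopologicalSpace X] {μ : C(X, ℝ) → ℝ}

theorem map_const (hμ : IsTopical μ) (c : ℝ) : μ (ContinuousMap.const X c) = c + μ 0 := by
  simpa only [add_zero] using hμ.const_add c 0

theorem map_le_add (hμ : IsTopical μ) {f g : C(X, ℝ)} {c : ℝ} (h : ∀ x, f x ≤ c + g x) :
    μ f ≤ c + μ g :=
  hμ.const_add c g ▸ hμ.monotone h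

theorem abs_sub_le (hμ : IsTopical μ) {f g : C(X, ℝ)} {c : ℝ} (h : ∀ x, |f x - g x| ≤ c) :
    |μ f - μ g| ≤ c := by
  simp_rw [abs_sub_le_iff, sub_le_iff_le_add] at h ⊢
  exact ⟨hμ.map_le_add fun x ↦ (h x).1, hμ.map_le_add fun x ↦ (h x).2⟩

end TopologicalSpace

theorem abs_sub_map_const_le {X : Type*} [PseudoMetricSpace X] [BoundedSpace X]
    {μ : C(X, ℝ) → ℝ} (hμ : IsTopical μ) {K : ℝ≥0} {g : C(X, ℝ)} (hg : LipschitzWith K g)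
    (x₀ : X) :
    |μ g - μ (ContinuousMap.const X (g x₀))| ≤ K * Metric.diam (Set.univ : Set X) :=
  hμ.abs_sub_le fun x ↦ hg.dist_le_mul_of_le <|
    Metric.dist_le_diam_of_mem (.all Set.univ) (Set.mem_univ x) (Set.mem_univ x₀)

theorem abs_sub_le_of_lipschitzWith {X : Type*} [PseudoMetricSpace X] [BoundedSpace X] [Nonempty X]
    {μ ν : C(X, ℝ) → ℝ} (hμ : IsTopical μ) (hν : IsTopical ν) {K : ℝ≥0} {g : C(X, ℝ)}
    (hg : LipschitzWith K g) :
    |μ g - ν g| ≤ 2 * (K * Metric.diam (Set.univ : Set X)) + |μ 0 - ν 0| := by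
  obtain ⟨x₀⟩ := ‹Nonempty X›
  set c := ContinuousMap.const X (g x₀)
  have hc : μ c - ν c = μ 0 - ν 0 := by
    rw [hμ.map_const, hν.map_const, add_sub_add_left_eq_sub]
  calc |μ g - ν g| = |(μ g - μ c) - (ν g - ν c) + (μ 0 - ν 0)| := by rw [← hc]; congr 1; ring
    _ ≤ |μ g - μ c| + |ν g - ν c| + |μ 0 - ν 0| :=
      (abs_add_le _ _).trans <| by gcongr; exact abs_sub _ _
    _ ≤ 2 * (K * Metric.diam (Set.univ : Set X)) + |μ 0 - ν 0| := by
      rw [two_mul]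
      gcongr
      exacts [hμ.abs_sub_map_const_le hg x₀, hν.abs_sub_map_const_le hg x₀]

theorem abs_sub_le_dLip {X : Type*} [MetricSpace X] [BoundedSpace X] [Nonempty X]
    {μ ν : C(X, ℝ) → ℝ} (hμ : IsTopical μ) (hν : IsTopical ν) {a : ℝ} {g : C(X, ℝ)}
    (hg : LipschitzWith a.toNNReal g) : |μ g - ν g| ≤ dLip a μ ν := by
  refine le_csSup ⟨2 * (a.toNNReal * Metric.diam (Set.univ : Set X)) + |μ 0 - ν 0|, ?_⟩ ⟨g, hg, rfl⟩
  rintro _ ⟨f, hf, rfl⟩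
  exact hμ.abs_sub_le_of_lipschitzWith hν hf

end IsTopical

theorem dLip_le {X : Type*} [MetricSpace X] {a d : ℝ} {μ ν : C(X, ℝ) → ℝ}
    (h : ∀ g : C(X, ℝ), LipschitzWith a.toNNReal g → |μ g - ν g| ≤ d) : dLip a μ ν ≤ d := by
  refine csSup_le ⟨_, 0, LipschitzWith.const' 0, rfl⟩ ?_
  rintro _ ⟨g, hg, rfl⟩
  exact h g hg

/-- The max-plus Markov operator of the maps `φ j` with weights `q j`, `j ∈ s`, sending functionals
on `C(X, ℝ)` to functionals on `C(Y, ℝ)`. The Markov operator `M` of an iterated function system is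
the case `Y = X`. -/
noncomputable def maxPlusMarkov {ι X Y : Type*} [TopologicalSpace X] [TopologicalSpace Y]
    (s : Finset ι) (hs : s.Nonempty) (q : ι → ℝ) (φ : ι → C(X, Y)) (μ : C(X, ℝ) → ℝ)
    (f : C(Y, ℝ)) : ℝ :=
  s.sup' hs fun j ↦ q j + μ (f.comp (φ j))

theorem markov_operator_dLip_estimate_general {ι X Y : Type*} [MetricSpace X] [BoundedSpace X]
    [Nonempty X] [MetricSpace Y] {s : Finset ι} (hs : s.Nonempty) (q : ι → ℝ) {φ : ι → C(X, Y)}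
    {γ : ℝ≥0} (hφ : ∀ j ∈ s, LipschitzWith γ (φ j)) (a : ℝ≥0) {μ ν : C(X, ℝ) → ℝ}
    (hμ : IsTopical μ) (hν : IsTopical ν) :
    dLip a (maxPlusMarkov s hs q φ μ) (maxPlusMarkov s hs q φ ν) ≤ dLip (γ * a) μ ν := by
  refine dLip_le fun g hg ↦ abs_sup'_sub_sup'_le hs fun j hj ↦ ?_
  have hgφ : LipschitzWith (γ * a : ℝ).toNNReal (g.comp (φ j)) := by
    rw [Real.toNNReal_coe] at hg
    rw [← NNReal.coe_mul, Real.toNNReal_coe, mul_comm]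
    exact hg.comp (hφ j hj)
  rw [add_sub_add_left_eq_sub]
  exact hμ.abs_sub_le_dLip hν hgφ

theorem markov_operator_dLip_estimate
    {X : Type*} [MetricSpace X] [CompactSpace X] [Nonempty X]
    (γ : ℝ) (hγ0 : 0 < γ) (hγ1 : γ < 1)
    (n : ℕ) (φ : Fin (n + 1) → X → X) (hφ : ∀ j, LipschitzWith (Real.toNNReal γ) (φ j))
    (q : Fin (n + 1) → ℝ)
    (hq : Finset.univ.sup' Finset.univ_nonempty q = 0)
    (a : ℝ) (ha : 0 < a)
    (μ ν : C(X, ℝ) → ℝ) (hμ : IsIdempotentProb μ) (hν : IsIdempotentProb ν) :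
    dLip a
        (fun f : C(X, ℝ) => Finset.univ.sup' Finset.univ_nonempty
          (fun j => q j + μ (f.comp ⟨φ j, (hφ j).continuous⟩)))
        (fun f : C(X, ℝ) => Finset.univ.sup' Finset.univ_nonempty
          (fun j => q j + ν (f.comp ⟨φ j, (hφ j).continuous⟩))) ≤
      dLip (γ * a) μ ν := by
  have h := markov_operator_dLip_estimate_general Finset.univ_nonempty q
    (φ := fun j ↦ ⟨φ j, (hφ j).continuous⟩) (fun j _ ↦ hφ j) a.toNNReal hμ.isTopical hν.isTopical
  rwa [Real.coe_toNNReal γ hγ0.le, Real.coe_toNNReal a ha.le] at h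
end
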